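/- There is a graded k-algebra homomorphism ρ: U(W₊) → k(X)[t; τ*] determined by ρ(e₁) = t and ρ(e₂) = f t², where k(X)[t; τ*] is the skew polynomial ring over k(X) (the free left k(X)-module with basis {tⁿ}_{n≥0} and multiplication determined by t·g = τ*(g)·t for g ∈ k(X)), graded with t in degree 1. -/

import Mathlib

set_option maxHeartbeats 1000000
set_option synthInstance.maxHeartbeats 1000000

noncomputable section

open MvPolynomial

variable (k : Type*) [Field k]

/-- The polynomial ring k[w,x,y,z], with w,x,y,z the variables indexed by 0,1,2,3. -/
abbrev conePoly := MvPolynomial (Fin 4) k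

/-- The relation xz − y². -/
def coneRel : conePoly k := X 1 * X 3 - X 2 ^ 2

/-- The ideal (xz − y²). -/
def coneIdeal : Ideal (conePoly k) := Ideal.span {coneRel k}

/-- The coordinate ring A = k[w,x,y,z]/(xz − y²) of the affine cone. -/
abbrev coneRing := conePoly k ⧸ coneIdeal k

/-- The substitution w ↦ w − 2x + 2z, x ↦ z, y ↦ −y − 2z, z ↦ x + 4y + 4z. -/
def tauSub : Fin 4 → conePoly k :=
  ![X 0 - 2 * X 1 + 2 * X 3, X 3, - X 2 - 2 * X 3, X 1 + 4 * X 2 + 4 * X 3]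

/-- The inverse substitution. -/
def tauInvSub : Fin 4 → conePoly k :=
  ![X 0 + 6 * X 1 + 8 * X 2 + 2 * X 3, 4 * X 1 + 4 * X 2 + X 3, - (2 * X 1) - X 2, X 1]

/-- The substitution τ* as an algebra automorphism of k[w,x,y,z]. -/
def tauPoly : conePoly k ≃ₐ[k] conePoly k :=
  AlgEquiv.ofAlgHom (aeval (tauSub k)) (aeval (tauInvSub k))
    (by
      apply MvPolynomial.algHom_ext
      intro i
      fin_cases i <;> simp [tauSub, tauInvSub, map_ofNat] <;> ring)
    (by
      apply MvPolynomial.algHom_ext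
      intro i
      fin_cases i <;> simp [tauSub, tauInvSub, map_ofNat] <;> ring)

lemma tauPoly_coneRel : tauPoly k (coneRel k) = coneRel k := by
  show aeval (tauSub k) (coneRel k) = coneRel k
  simp only [coneRel, tauSub, Matrix.cons_val_zero, Matrix.cons_val_one, Matrix.head_cons,
    Matrix.cons_val_two, Matrix.tail_cons, Matrix.cons_val_three,
    map_add, map_sub, map_mul, map_neg, map_ofNat, map_pow, aeval_X]
  ring

lemma coneIdeal_eq_map :
    coneIdeal k = (coneIdeal k).map (tauPoly k : conePoly k →+* conePoly k) := by
  have h : (tauPoly k : conePoly k →+* conePoly k) (coneRel k) = coneRel k := tauPoly_coneRel k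
  rw [coneIdeal, Ideal.map_span, Set.image_singleton, h]

/-- The automorphism τ* of A = k[w,x,y,z]/(xz − y²) induced by the substitution. -/
def tauCone : coneRing k ≃ₐ[k] coneRing k :=
  Ideal.quotientEquivAlg (coneIdeal k) (coneIdeal k) (tauPoly k) (coneIdeal_eq_map k)

/-- k(X), the fraction field of A. -/
abbrev coneField := FractionRing (coneRing k)

/-- The automorphism τ* of k(X) induced by τ*. -/
def tauFrac :=
  IsFractionRing.algEquivOfAlgEquiv (R := k) (K := coneField k) (L := coneField k) (tauCone k)

/-- The images of the coordinates w, x, y, z in k(X). -/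
def varK (i : Fin 4) : coneField k :=
  algebraMap (coneRing k) (coneField k) (Ideal.Quotient.mk (coneIdeal k) (X i))

variable [IsDomain (coneRing k)]

/-- The rational function f = (w + 12x + 22y + 8z)/(12x + 6y) ∈ k(X). -/
def fRat : coneField k :=
  (varK k 0 + 12 * varK k 1 + 22 * varK k 2 + 8 * varK k 3) /
    (12 * varK k 1 + 6 * varK k 2)

/-- fᵢ = (τ*)^i (f). -/
def fIter (i : ℕ) : coneField k := ((tauFrac k) ^ i) (fRat k)

end

/-!
Statement 6: There is a graded k-algebra homomorphism ρ: U(W₊) → k(X)[t; τ*] determined by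
ρ(e₁) = t and ρ(e₂) = f·t².

Here the skew polynomial ring k(X)[t; τ*] — the free left k(X)-module with basis {tⁿ} and
multiplication determined by t·g = τ*(g)·t — is realized concretely as a subalgebra of the
k-linear endomorphisms of the free left k(X)-module ℕ →₀ k(X): the element g·tⁿ acts as
"multiply coefficients by g on the left, twist them by (τ*)ⁿ, and shift degrees up by n";
thus k(X)[t; τ*] is the subalgebra generated by the operator `tOp` (left multiplication
by t) together with the operators `mulOp g` (left multiplication by g ∈ k(X)), and its
degree-n homogeneous component consists of the operators `mulOp g * tOp ^ n`.
The grading of U(W₊) is given by deg eₙ = n: the degree-n component is the k-span of all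
products e_{i₁} ⋯ e_{i_r} with i₁ + ⋯ + i_r = n.
-/

noncomputable section

open Polynomial in
/-- The derivation `e n = x^(n+1) d/dx` of `k[x]`. -/
def wittGen (k : Type*) [Field k] (n : ℕ) : Derivation k k[X] k[X] :=
  (X : k[X]) ^ (n + 1) • Polynomial.derivative'

open Polynomial in
/-- The positive Witt algebra `W₊`. -/
def positiveWitt (k : Type*) [Field k] : LieSubalgebra k (Derivation k k[X] k[X]) :=
  LieSubalgebra.lieSpan k _ {d | ∃ n : ℕ, 1 ≤ n ∧ d = wittGen k n}

/-- The element `e (m+1)` of `W₊` (so `wittEltS k 0 = e₁`, `wittEltS k 1 = e₂`, …). -/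
def wittEltS (k : Type*) [Field k] (m : ℕ) : positiveWitt k :=
  ⟨wittGen k (m + 1), LieSubalgebra.subset_lieSpan ⟨m + 1, by omega, rfl⟩⟩

/-- The degree-n homogeneous component of U(W₊) (deg eₙ = n): the k-span of the products
`e_{i₁} ⋯ e_{i_r}` with `i₁ + ⋯ + i_r = n`. -/
def Udeg (k : Type*) [Field k] (n : ℕ) :
    Submodule k (UniversalEnvelopingAlgebra k (positiveWitt k)) :=
  Submodule.span k
    {u | ∃ l : List ℕ, (l.map (· + 1)).sum = n ∧
      u = (l.map fun m => UniversalEnvelopingAlgebra.ι k (wittEltS k m)).prod}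

variable (k : Type*) [Field k] [IsDomain (coneRing k)]

/-- Left multiplication by g ∈ k(X) on the free module ⊕ₙ k(X)·tⁿ = (ℕ →₀ k(X)). -/
def mulOp (g : coneField k) : Module.End k (ℕ →₀ coneField k) :=
  Finsupp.mapRange.linearMap (LinearMap.mulLeft k g)

/-- Left multiplication by t on ⊕ₙ k(X)·tⁿ:  t · (g tⁿ) = τ*(g) t^(n+1). -/
def tOp : Module.End k (ℕ →₀ coneField k) :=
  (Finsupp.lmapDomain (coneField k) k Nat.succ).comp
    (Finsupp.mapRange.linearMap (tauFrac k).toLinearMap)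

/-- The skew polynomial ring k(X)[t; τ*], realized as the subalgebra of
End_k(⊕ₙ k(X)·tⁿ) generated by t and the left multiplications by elements of k(X). -/
def skewPolyRing : Subalgebra k (Module.End k (ℕ →₀ coneField k)) :=
  Algebra.adjoin k ({tOp k} ∪ Set.range (mulOp k))

section Witt

open Polynomial

variable {k : Type*} [Field k]

lemma wittGen_apply_X (n : ℕ) : wittGen k n (X : k[X]) = X ^ (n + 1) := by
  simp [wittGen, Polynomial.derivative']

lemma lie_wittGen (n m : ℕ) :
    ⁅wittGen k n, wittGen k m⁆ = ((m : k) - n) • wittGen k (n + m) := by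
  apply Polynomial.derivation_ext
  have h (n m : ℕ) :
      wittGen k n ((X : k[X]) ^ (m + 1)) = ((m : k) + 1) • X ^ (n + m + 1) := by
    simp [wittGen, Polynomial.derivative', smul_eq_C_mul, -mul_eq_mul_left_iff, -mul_eq_mul_right_iff]
    ring
  rw [Derivation.commutator_apply, Derivation.smul_apply]
  simp only [wittGen_apply_X, h]
  rw [add_comm m n, ← sub_smul]
  congr 1
  ring

/-- If the brackets of elements of a set lie in its linear span, then this span is the Lie
subalgebra generated by the set. -/
lemma lieSpan_toSubmodule_eq_span {L : Type*} [LieRing L] [LieAlgebra k L] {s : Set L}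
    (hs : ∀ x ∈ s, ∀ y ∈ s, ⁅x, y⁆ ∈ Submodule.span k s) :
    (LieSubalgebra.lieSpan k L s).toSubmodule = Submodule.span k s := by
  have closed : ∀ {x y}, x ∈ Submodule.span k s → y ∈ Submodule.span k s →
      ⁅x, y⁆ ∈ Submodule.span k s := by
    intro x y hx hy
    induction hx, hy using Submodule.span_induction₂ with
    | mem_mem x y hx hy => exact hs x hx y hy
    | zero_left y hy => simp
    | zero_right x hx => simp
    | add_left x y z _ _ _ hx hy => simp [add_mem hx hy]
    | add_right x y z _ _ _ hx hy => simp [add_mem hx hy]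
    | smul_left r x y _ _ h => simp [Submodule.smul_mem _ r h]
    | smul_right r x y _ _ h => simp [Submodule.smul_mem _ r h]
  refine le_antisymm ?_ LieSubalgebra.submodule_span_le_lieSpan
  change _ ≤ ({ Submodule.span k s with lie_mem' := closed } : LieSubalgebra k L)
  exact LieSubalgebra.lieSpan_le.mpr Submodule.subset_span

lemma positiveWitt_toSubmodule :
    (positiveWitt k).toSubmodule =
      Submodule.span k {d | ∃ n : ℕ, 1 ≤ n ∧ d = wittGen k n} := by
  refine lieSpan_toSubmodule_eq_span ?_
  rintro _ ⟨n, hn, rfl⟩ _ ⟨m, -, rfl⟩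
  rw [lie_wittGen]
  exact Submodule.smul_mem _ _ (Submodule.subset_span ⟨n + m, by omega, rfl⟩)

attribute [local instance 100] LieRing.ofAssociativeRing

/-- A linear map compatible with the Lie brackets on a set is compatible with them on its
linear span. -/
lemma map_lie_of_mem_span {L A : Type*} [LieRing L] [LieAlgebra k L] [Ring A] [Algebra k A]
    (Φ : L →ₗ[k] A) {s : Set L} (hs : ∀ x ∈ s, ∀ y ∈ s, Φ ⁅x, y⁆ = ⁅Φ x, Φ y⁆) {x y : L}
    (hx : x ∈ Submodule.span k s) (hy : y ∈ Submodule.span k s) :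
    Φ ⁅x, y⁆ = ⁅Φ x, Φ y⁆ := by
  induction hx, hy using Submodule.span_induction₂ with
  | mem_mem x y hx hy => exact hs x hx y hy
  | zero_left y hy => simp
  | zero_right x hx => simp
  | add_left x y z _ _ _ hx hy => simp [hx, hy]
  | add_right x y z _ _ _ hx hy => simp [hx, hy]
  | smul_left r x y _ _ h => simp [h]
  | smul_right r x y _ _ h => rw [lie_smul, map_smul, h, map_smul, Ring.lie_def, Ring.lie_def,
      mul_smul_comm, smul_mul_assoc, smul_sub]

/-- A family of elements of an associative algebra satisfying the relations of the basis of the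
positive Witt algebra defines a homomorphism from the enveloping algebra. -/
lemma exists_algHom_of_witt_relations {A : Type*} [Ring A] [Algebra k A] (E : ℕ → A)
    (hE : ∀ n m, E n * E m - E m * E n = ((m : k) - n) • E (n + m)) :
    ∃ φ : UniversalEnvelopingAlgebra k (positiveWitt k) →ₐ[k] A,
      ∀ m, φ (UniversalEnvelopingAlgebra.ι k (wittEltS k m)) = E (m + 1) := by
  let ev : Derivation k k[X] k[X] →ₗ[k] k[X] :=
    { toFun := fun d => d X
      map_add' := fun _ _ => rfl
      map_smul' := fun _ _ => rfl }
  let Φ : Derivation k k[X] k[X] →ₗ[k] A :=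
    ((Polynomial.basisMonomials k).constr k fun i => E (i - 1)) ∘ₗ ev
  have hΦ (n : ℕ) : Φ (wittGen k n) = E n := by
    have : ev (wittGen k n) = Polynomial.basisMonomials k (n + 1) := by
      simp [ev, wittGen_apply_X, X_pow_eq_monomial]
    simp only [Φ, LinearMap.comp_apply, this, Module.Basis.constr_basis, Nat.add_sub_cancel]
  have hlie (x y : positiveWitt k) : Φ ⁅(x : Derivation k k[X] k[X]), (y : Derivation k k[X] k[X])⁆
      = ⁅Φ x, Φ y⁆ := by
    refine map_lie_of_mem_span Φ ?_ (positiveWitt_toSubmodule.le x.2)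
      (positiveWitt_toSubmodule.le y.2)
    rintro _ ⟨n, -, rfl⟩ _ ⟨m, -, rfl⟩
    rw [lie_wittGen, map_smul, hΦ, hΦ, hΦ, LieRing.of_associative_ring_bracket, hE n m]
  let φ : positiveWitt k →ₗ⁅k⁆ A :=
    { Φ ∘ₗ (positiveWitt k).toSubmodule.subtype with map_lie' := fun {x y} => hlie x y }
  refine ⟨UniversalEnvelopingAlgebra.lift k φ, fun m => ?_⟩
  rw [UniversalEnvelopingAlgebra.lift_ι_apply]
  exact hΦ (m + 1)

/-- The homomorphism attached to a family satisfying the Witt relations takes values in any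
subalgebra containing the family. -/
lemma exists_algHom_mem_of_witt_relations {A : Type*} [Ring A] [Algebra k A] (S : Subalgebra k A)
    (E : ℕ → A) (hS : ∀ n, E n ∈ S)
    (hE : ∀ n m, E n * E m - E m * E n = ((m : k) - n) • E (n + m)) :
    ∃ φ : UniversalEnvelopingAlgebra k (positiveWitt k) →ₐ[k] A, (∀ u, φ u ∈ S) ∧
      ∀ m, φ (UniversalEnvelopingAlgebra.ι k (wittEltS k m)) = E (m + 1) := by
  obtain ⟨φ, hφ⟩ := exists_algHom_of_witt_relations (k := k) (fun n => (⟨E n, hS n⟩ : S))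
    fun n m => Subtype.ext (hE n m)
  exact ⟨S.val.comp φ, fun u => (φ u).2, fun m => congrArg Subtype.val (hφ m)⟩

end Witt

section SkewPolynomial

variable {k}

lemma mulOp_mul (g h : coneField k) : mulOp k (g * h) = mulOp k g * mulOp k h := by
  refine Finsupp.lhom_ext fun i c => ?_
  simp only [mulOp, Module.End.mul_apply, Finsupp.mapRange.linearMap_apply,
    Finsupp.mapRange_single, LinearMap.mulLeft_apply, mul_assoc]

lemma mulOp_one : mulOp k 1 = 1 := by
  ext
  simp [mulOp]

lemma mulOp_zero : mulOp k 0 = 0 := by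
  ext
  simp [mulOp]

lemma mulOp_add (g h : coneField k) : mulOp k (g + h) = mulOp k g + mulOp k h := by
  ext
  simp [mulOp, add_mul]

lemma mulOp_sub (g h : coneField k) : mulOp k (g - h) = mulOp k g - mulOp k h := by
  ext
  simp [mulOp, sub_mul]

lemma mulOp_smul (c : k) (g : coneField k) : mulOp k (c • g) = c • mulOp k g := by
  refine Finsupp.lhom_ext fun i a => ?_
  simp only [mulOp, LinearMap.smul_apply, Finsupp.mapRange.linearMap_apply,
    Finsupp.mapRange_single, LinearMap.mulLeft_apply, smul_mul_assoc, Finsupp.smul_single]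

lemma tOp_mul_mulOp (g : coneField k) :
    tOp k * mulOp k g = mulOp k (tauFrac k g) * tOp k := by
  refine Finsupp.lhom_ext fun i a => ?_
  simp only [mulOp, tOp, Module.End.mul_apply, LinearMap.comp_apply,
    Finsupp.mapRange.linearMap_apply, Finsupp.mapRange_single, LinearMap.mulLeft_apply,
    Finsupp.lmapDomain_apply, Finsupp.mapDomain_single, AlgEquiv.toLinearMap_apply, map_mul]

lemma tOp_pow_mul_mulOp (n : ℕ) (g : coneField k) :
    tOp k ^ n * mulOp k g = mulOp k ((tauFrac k)^[n] g) * tOp k ^ n := by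
  induction n generalizing g with
  | zero => simp
  | succ n ih =>
    rw [pow_succ, mul_assoc, tOp_mul_mulOp, ← mul_assoc, ih, mul_assoc,
      Function.iterate_succ_apply]

lemma tOp_mem : tOp k ∈ skewPolyRing k :=
  Algebra.subset_adjoin (Or.inl rfl)

lemma mulOp_mem (g : coneField k) : mulOp k g ∈ skewPolyRing k :=
  Algebra.subset_adjoin (Or.inr ⟨g, rfl⟩)

variable (k) in
/-- The operators `mulOp g * tOp ^ n`, i.e. the homogeneous component of degree `n` of the skew
polynomial ring. -/
def skewComponent (n : ℕ) : Submodule k (Module.End k (ℕ →₀ coneField k)) where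
  carrier := {a | ∃ g : coneField k, a = mulOp k g * tOp k ^ n}
  zero_mem' := ⟨0, by rw [mulOp_zero, zero_mul]⟩
  add_mem' := by
    rintro _ _ ⟨g, rfl⟩ ⟨h, rfl⟩
    exact ⟨g + h, by rw [mulOp_add, add_mul]⟩
  smul_mem' := by
    rintro c _ ⟨g, rfl⟩
    exact ⟨c • g, by rw [mulOp_smul, smul_mul_assoc]⟩

lemma one_mem_skewComponent : (1 : Module.End k (ℕ →₀ coneField k)) ∈ skewComponent k 0 :=
  ⟨1, by rw [mulOp_one, pow_zero, mul_one]⟩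

lemma mul_mem_skewComponent {a b : Module.End k (ℕ →₀ coneField k)} {n m : ℕ}
    (ha : a ∈ skewComponent k n) (hb : b ∈ skewComponent k m) :
    a * b ∈ skewComponent k (n + m) := by
  obtain ⟨g, rfl⟩ := ha
  obtain ⟨h, rfl⟩ := hb
  refine ⟨g * (tauFrac k)^[n] h, ?_⟩
  rw [mulOp_mul, pow_add, mul_assoc, ← mul_assoc (tOp k ^ n), tOp_pow_mul_mulOp]
  simp only [mul_assoc]

/-- The operator `q⁻¹ t`, up to sign: the shift in whose powers the tensor density
representation of the Witt algebra is written. -/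
def densityShift (q : coneField k) : Module.End k (ℕ →₀ coneField k) :=
  mulOp k (-q⁻¹) * tOp k

/-- The image of `e n` in the tensor density representation with parameter `l`. -/
def densityOp (q l : coneField k) (n : ℕ) : Module.End k (ℕ →₀ coneField k) :=
  mulOp k (-(q + l * (n - 1))) * densityShift q ^ n

lemma densityShift_mul_mulOp (q g : coneField k) :
    densityShift q * mulOp k g = mulOp k (tauFrac k g) * densityShift q := by
  rw [densityShift, mul_assoc, tOp_mul_mulOp, ← mul_assoc, ← mul_assoc, ← mulOp_mul, ← mulOp_mul,
    mul_comm]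

lemma densityShift_pow_mul_mulOp (q g : coneField k) (n : ℕ) :
    densityShift q ^ n * mulOp k g = mulOp k ((tauFrac k)^[n] g) * densityShift q ^ n := by
  induction n generalizing g with
  | zero => simp
  | succ n ih =>
    rw [pow_succ, mul_assoc, densityShift_mul_mulOp, ← mul_assoc, ih, mul_assoc,
      Function.iterate_succ_apply]

lemma tauFrac_iterate_density {q l : coneField k} (hq : tauFrac k q = q + 1)
    (hl : tauFrac k l = l) (n m : ℕ) :
    (tauFrac k)^[n] (-(q + l * (m - 1))) = -(q + n + l * (m - 1)) := by
  induction n with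
  | zero => simp
  | succ n ih =>
    rw [Function.iterate_succ_apply', ih]
    simp only [map_neg, map_add, map_mul, map_sub, map_natCast, map_one, hq, hl]
    push_cast
    ring

lemma densityOp_mul {q l : coneField k} (hq : tauFrac k q = q + 1)
    (hl : tauFrac k l = l) (n m : ℕ) :
    densityOp q l n * densityOp q l m =
      mulOp k ((q + l * (n - 1)) * (q + n + l * (m - 1))) * densityShift q ^ (n + m) := by
  rw [densityOp, densityOp, mul_assoc, ← mul_assoc (densityShift q ^ n),
    densityShift_pow_mul_mulOp, tauFrac_iterate_density hq hl, mul_assoc, ← pow_add, ← mul_assoc,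
    ← mulOp_mul, neg_mul_neg]

lemma densityOp_commutator {q l : coneField k} (hq : tauFrac k q = q + 1)
    (hl : tauFrac k l = l) (n m : ℕ) :
    densityOp q l n * densityOp q l m - densityOp q l m * densityOp q l n =
      ((m : k) - n) • densityOp q l (n + m) := by
  rw [densityOp_mul hq hl, densityOp_mul hq hl, add_comm m n, densityOp, ← smul_mul_assoc,
    ← mulOp_smul, ← sub_mul (mulOp k _) (mulOp k _) (densityShift q ^ (n + m)), ← mulOp_sub]
  congr 2
  rw [Algebra.smul_def, map_sub, map_natCast, map_natCast]
  push_cast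
  ring

lemma densityOp_mem (q l : coneField k) (n : ℕ) : densityOp q l n ∈ skewPolyRing k :=
  mul_mem (mulOp_mem _) (pow_mem (mul_mem (mulOp_mem _) tOp_mem) n)

lemma densityOp_mem_skewComponent (q l : coneField k) (n : ℕ) :
    densityOp q l n ∈ skewComponent k n := by
  have hpow : densityShift q ^ n ∈ skewComponent k n := by
    induction n with
    | zero => simpa using one_mem_skewComponent
    | succ n ih =>
      rw [pow_succ]
      exact mul_mem_skewComponent ih ⟨-q⁻¹, by rw [densityShift, pow_one]⟩
  have h : mulOp k (-(q + l * (n - 1))) ∈ skewComponent k 0 :=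
    ⟨_, by rw [pow_zero, mul_one]⟩
  simpa only [densityOp, zero_add] using mul_mem_skewComponent h hpow

lemma densityOp_one {q : coneField k} (hq : q ≠ 0) (l : coneField k) :
    densityOp q l 1 = tOp k := by
  rw [densityOp, pow_one, densityShift, ← mul_assoc, ← mulOp_mul]
  have : -(q + l * ((1 : ℕ) - 1)) * -q⁻¹ = 1 := by
    simp [hq]
  rw [this, mulOp_one, one_mul]

lemma densityOp_two {q : coneField k} (hq : tauFrac k q = q + 1) (l : coneField k) :
    densityOp q l 2 = mulOp k (-(q + l) / (q * (q + 1))) * tOp k ^ 2 := by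
  rw [densityOp, pow_two (densityShift q)]
  nth_rw 2 [densityShift]
  rw [← mul_assoc (densityShift q), densityShift_mul_mulOp, densityShift]
  simp only [← mul_assoc, ← mulOp_mul, map_neg, map_inv₀, hq]
  rw [mul_assoc, ← pow_two]
  congr 2
  push_cast
  rw [div_eq_mul_inv, mul_inv]
  ring

end SkewPolynomial

section Cone

variable {k}

lemma varK_mul_varK : varK k 1 * varK k 3 = varK k 2 ^ 2 := by
  simp only [varK, ← map_mul, ← map_pow]
  congr 1
  exact Ideal.Quotient.eq.mpr (Ideal.subset_span rfl)

lemma tauFrac_varK (i : Fin 4) :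
    tauFrac k (varK k i) =
      algebraMap (coneRing k) (coneField k) (Ideal.Quotient.mk (coneIdeal k) (tauSub k i)) := by
  rw [varK, tauFrac, IsFractionRing.algEquivOfAlgEquiv_algebraMap]
  congr 1
  change Ideal.Quotient.mk (coneIdeal k) (MvPolynomial.aeval (tauSub k) (MvPolynomial.X i)) = _
  rw [MvPolynomial.aeval_X]

lemma tauFrac_varK_zero :
    tauFrac k (varK k 0) = varK k 0 - 2 * varK k 1 + 2 * varK k 3 := by
  rw [tauFrac_varK]
  simp [tauSub, varK, map_ofNat]

lemma tauFrac_varK_one : tauFrac k (varK k 1) = varK k 3 := by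
  rw [tauFrac_varK]
  simp [tauSub, varK, map_ofNat]

lemma tauFrac_varK_two : tauFrac k (varK k 2) = -varK k 2 - 2 * varK k 3 := by
  rw [tauFrac_varK]
  simp [tauSub, varK, map_ofNat]

lemma tauFrac_varK_three :
    tauFrac k (varK k 3) = varK k 1 + 4 * varK k 2 + 4 * varK k 3 := by
  rw [tauFrac_varK]
  simp [tauSub, varK, map_ofNat]

lemma tauFrac_fixedForm :
    tauFrac k (varK k 1 + 2 * varK k 2 + varK k 3) = varK k 1 + 2 * varK k 2 + varK k 3 := by
  simp only [map_add, map_mul, map_ofNat, tauFrac_varK_one, tauFrac_varK_two, tauFrac_varK_three]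
  ring

/-- A linear form in `x, y, z` that does not vanish at the point `(0, 1, 1, 1)` of the cone is
nonzero in the function field. -/
lemma linear_varK_ne_zero [CharZero k] (a b c : ℕ) (h : a + b + c ≠ 0) :
    (a : coneField k) * varK k 1 + b * varK k 2 + c * varK k 3 ≠ 0 := by
  intro h0
  let p : conePoly k := (a : conePoly k) * MvPolynomial.X 1 + (b : conePoly k) * MvPolynomial.X 2 +
    (c : conePoly k) * MvPolynomial.X 3
  have hp : algebraMap (coneRing k) (coneField k) (Ideal.Quotient.mk (coneIdeal k) p) = 0 := by
    simpa [p, varK] using h0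
  rw [IsFractionRing.to_map_eq_zero_iff, Ideal.Quotient.eq_zero_iff_mem, coneIdeal,
    Ideal.mem_span_singleton] at hp
  obtain ⟨r, hr⟩ := hp
  have := congrArg (MvPolynomial.eval (![0, 1, 1, 1] : Fin 4 → k)) hr
  simp [p, coneRel] at this
  exact h (by exact_mod_cast this)

variable (k) in
/-- The coordinate `(y + z)/(x + 2y + z) - 2`, on which the automorphism acts by translation
by `1`. -/
def coneTranslate : coneField k :=
  -(2 * varK k 1 + 3 * varK k 2 + varK k 3) / (varK k 1 + 2 * varK k 2 + varK k 3)

variable (k) in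
/-- The invariant of the automorphism which is the parameter of the tensor density
representation. -/
def coneInvariant : coneField k :=
  -(varK k 0 / (varK k 1 + 2 * varK k 2 + varK k 3) - 2 * coneTranslate k ^ 2
    - 4 * coneTranslate k) / 6

variable [CharZero k]

lemma fixedForm_ne_zero : varK k 1 + 2 * varK k 2 + varK k 3 ≠ 0 := by
  simpa using linear_varK_ne_zero (k := k) 1 2 1 (by norm_num)

lemma coneTranslate_ne_zero : coneTranslate k ≠ 0 := by
  have h : 2 * varK k 1 + 3 * varK k 2 + varK k 3 ≠ 0 := by
    simpa using linear_varK_ne_zero (k := k) 2 3 1 (by norm_num)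
  exact div_ne_zero (neg_ne_zero.mpr h) fixedForm_ne_zero

lemma tauFrac_coneTranslate : tauFrac k (coneTranslate k) = coneTranslate k + 1 := by
  have h := fixedForm_ne_zero (k := k)
  rw [coneTranslate, map_div₀, tauFrac_fixedForm]
  simp only [map_neg, map_add, map_mul, map_ofNat, tauFrac_varK_one, tauFrac_varK_two,
    tauFrac_varK_three]
  field_simp
  ring

lemma tauFrac_coneInvariant : tauFrac k (coneInvariant k) = coneInvariant k := by
  have h := fixedForm_ne_zero (k := k)
  rw [coneInvariant, map_div₀, map_neg, map_sub, map_sub, map_div₀, tauFrac_fixedForm]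
  simp only [map_mul, map_pow, map_ofNat, tauFrac_coneTranslate, tauFrac_varK_zero]
  congr 2
  rw [coneTranslate]
  field_simp
  ring

lemma fRat_eq : fRat k = -(coneTranslate k + coneInvariant k) /
    (coneTranslate k * (coneTranslate k + 1)) := by
  have : CharZero (coneField k) := charZero_of_injective_algebraMap (algebraMap k _).injective
  have hs := fixedForm_ne_zero (k := k)
  have hq := coneTranslate_ne_zero (k := k)
  have hxy : varK k 1 + varK k 2 ≠ 0 := by
    simpa using linear_varK_ne_zero (k := k) 1 1 0 (by norm_num)
  have hq1 : coneTranslate k + 1 =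
      -(varK k 1 + varK k 2) / (varK k 1 + 2 * varK k 2 + varK k 3) := by
    rw [coneTranslate]
    field_simp
    ring
  have hq1' : coneTranslate k + 1 ≠ 0 := by
    rw [hq1]
    exact div_ne_zero (neg_ne_zero.mpr hxy) hs
  have hden : 6 * (coneTranslate k * (coneTranslate k + 1)) *
      (varK k 1 + 2 * varK k 2 + varK k 3) = 12 * varK k 1 + 6 * varK k 2 := by
    rw [hq1, coneTranslate]
    field_simp
    linear_combination (-6) * varK_mul_varK (k := k)
  have hnum : -6 * (coneTranslate k + coneInvariant k) *
      (varK k 1 + 2 * varK k 2 + varK k 3) =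
      varK k 0 + 12 * varK k 1 + 22 * varK k 2 + 8 * varK k 3 := by
    rw [coneInvariant, coneTranslate]
    field_simp
    linear_combination 2 * varK_mul_varK (k := k)
  rw [fRat, ← hnum, ← hden]
  field_simp

end Cone

theorem exists_graded_hom_enveloping_to_skewPoly (k : Type*) [Field k] [CharZero k]
    [IsDomain (coneRing k)] :
    ∃ ρ : UniversalEnvelopingAlgebra k (positiveWitt k) →ₐ[k]
        Module.End k (ℕ →₀ coneField k),
      (∀ u, ρ u ∈ skewPolyRing k) ∧
      ρ (UniversalEnvelopingAlgebra.ι k (wittEltS k 0)) = tOp k ∧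
      ρ (UniversalEnvelopingAlgebra.ι k (wittEltS k 1)) =
        mulOp k (fRat k) * tOp k ^ 2 ∧
      ∀ (n : ℕ) (u : UniversalEnvelopingAlgebra k (positiveWitt k)), u ∈ Udeg k n →
        ∃ g : coneField k, ρ u = mulOp k g * tOp k ^ n := by
  have hq := tauFrac_coneTranslate (k := k)
  have hl := tauFrac_coneInvariant (k := k)
  obtain ⟨ρ, hmem, hρ⟩ := exists_algHom_mem_of_witt_relations (skewPolyRing k)
    (densityOp (coneTranslate k) (coneInvariant k)) (densityOp_mem _ _)
    (densityOp_commutator hq hl)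
  refine ⟨ρ, hmem, ?_, ?_, ?_⟩
  · rw [hρ, densityOp_one coneTranslate_ne_zero]
  · rw [hρ, densityOp_two hq, fRat_eq]
  · intro n u hu
    suffices h : Udeg k n ≤ (skewComponent k n).comap ρ.toLinearMap from h hu
    refine Submodule.span_le.mpr ?_
    rintro _ ⟨l, rfl, rfl⟩
    clear hu
    change ρ _ ∈ skewComponent k _
    induction l with
    | nil => simpa using one_mem_skewComponent
    | cons m l ih =>
      simp only [List.map_cons, List.prod_cons, List.sum_cons, map_mul, hρ]
      exact mul_mem_skewComponent (densityOp_mem_skewComponent _ _ _) ih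

end
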